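/- arXiv:2503.12713 — 2 statements merged into one kernel-verified Lean document; each statement's English description precedes it below -/
import Mathlib

section
/- Let d be a dendrogram and x, y ∈ d with lh x = lh y = m, and suppose that in Dec^•(d)(ω) one has x(m) < y(m) (where m denotes the parameter set {0,…,m−1}). Let x' be the immediate predecessor of x. Then either (x' ⊸ y and x < y in d), or Dec^•(d)(ω) ⊨ x'(m ∖ {e(x')}) < y(m). -/
/-!
Since `ξ` permutes `{0, …, m−1}`, its last value is its own rank among all values, so
`ξ (m−1) = e(x')` (`Predendro.Valid.last_eq`).  Hence the sequence of `x'(m ∖ {e(x')})` is the one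
of `x(m)` with its last parameter and last point removed.  The first difference between `x(m)` and
`y(m)` then lies at one of three places: before the parameter of index `m − 1`, where it also
witnesses `x'(m ∖ {e(x')}) < y(m)`; at that parameter, which is impossible because both sequences
have `x'` there and so both parameters equal `e(x')`; or at the last point, where `x` and `y` are
siblings with `x < y`.
-/

noncomputable section

/-- A predendrogram: a forest `(C, ⊸)` (presented via the length function `lh` and the
predecessor enumeration `pred`, where `pred x i` is the `i`-th point on the branch below
`x`, of length `i`, and `pred x (lh x) = x`), together with a partial order `<` linear on
roots and on sets of siblings, and a parameter-position function `e` defined on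
non-terminal points with `e x ≤ lh x`.  Every point lies below some terminal point. -/
structure Predendro where
  C : Type
  lt : C → C → Prop
  suc : C → C → Prop
  e : C → ℕ
  lh : C → ℕ
  pred : C → ℕ → C
  pred_self : ∀ x, pred x (lh x) = x
  pred_suc : ∀ x i, i < lh x → suc (pred x i) (pred x (i + 1))
  pred_lh : ∀ x i, i ≤ lh x → lh (pred x i) = i
  pred_pred : ∀ x i j, j ≤ i → i ≤ lh x → pred (pred x i) j = pred x j
  suc_char : ∀ x y, suc x y ↔ lh y = lh x + 1 ∧ pred y (lh x) = x
  lt_irrefl : ∀ x, ¬ lt x x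
  lt_trans : ∀ x y z, lt x y → lt y z → lt x z
  lt_linear : ∀ x y, lh x = lh y → (∀ i < lh x, pred x i = pred y i) →
    x = y ∨ lt x y ∨ lt y x
  e_le : ∀ x, (∃ z, suc x z) → e x ≤ lh x
  term_above : ∀ x, ∃ y, lh x ≤ lh y ∧ pred y (lh x) = x ∧ ∀ z, ¬ suc y z

namespace Predendro

variable (d : Predendro)

/-- `(x, ξ)` is a valid element of `Dec^•(d)(α)`: the parameters `ξ 0, …, ξ (lh x − 1)`
are pairwise distinct and `ξ i` is the `e(pred x i)`-th least element of
`{ξ 0, …, ξ i}` for each `i < lh x`. -/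
def Valid {α : Type} [LinearOrder α] (x : d.C) (ξ : ℕ → α) : Prop :=
  (∀ i j, i < j → j < d.lh x → ξ i ≠ ξ j) ∧
  ∀ i, i < d.lh x →
    ((Finset.range (i + 1)).filter fun j => ξ j < ξ i).card = d.e (d.pred x i)

/-- The Kleene–Brouwer comparison on elements of `Dec^•(d)(α)`:  either the second
sequence is a proper initial segment of the first (longer is smaller), or the first
difference (in the interleaved sequence `x₀, ξ₀, x₁, ξ₁, …`) is smaller. -/
def KBlt {α : Type} [LinearOrder α] (P Q : d.C × (ℕ → α)) : Prop :=
  (d.lh Q.1 < d.lh P.1 ∧ (∀ j ≤ d.lh Q.1, d.pred P.1 j = d.pred Q.1 j) ∧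
    ∀ j < d.lh Q.1, P.2 j = Q.2 j) ∨
  ∃ i, i ≤ d.lh P.1 ∧ i ≤ d.lh Q.1 ∧
    (∀ j < i, d.pred P.1 j = d.pred Q.1 j) ∧ (∀ j < i, P.2 j = Q.2 j) ∧
    ((d.pred P.1 i ≠ d.pred Q.1 i ∧ d.lt (d.pred P.1 i) (d.pred Q.1 i)) ∨
      (d.pred P.1 i = d.pred Q.1 i ∧ i < d.lh P.1 ∧ i < d.lh Q.1 ∧ P.2 i < Q.2 i))

/-- The elements of `Dec^•(d)(α)`. -/
def DecEl (α : Type) [LinearOrder α] : Type :=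
  {P : d.C × (ℕ → α) // d.Valid P.1 P.2}

/-- `d` is a dendrogram: the decoded predilator `Dec^•(d)` is a dilator, i.e. sends
well-orders to well-orders. -/
def IsDendrogram : Prop :=
  ∀ (α : Type) [LinearOrder α], WellFounded ((· < ·) : α → α → Prop) →
    WellFounded (fun P Q : d.DecEl α => d.KBlt P.1 Q.1)

end Predendro

/-!
Statement 11: Let `d` be a dendrogram, `x, y ∈ d` with `lh x = lh y = m > 0`, and suppose
`Dec^•(d)(ω) ⊨ x(m) < y(m)`, where `m` denotes the parameter set `{0, …, m−1}`.  Let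
`x'` be the immediate predecessor of `x`.  Then either (`x' ⊸ y` and `x < y` in `d`), or
`Dec^•(d)(ω) ⊨ x'(m ∖ {e(x')}) < y(m)`.
-/

/-- A parameter sequence that exhausts `{0, …, m−1}` ends with its own rank. -/
theorem Predendro.Valid.last_eq {d : Predendro} {x : d.C} {m : ℕ} (hm : 0 < m)
    (hx : d.lh x = m) {ξ : ℕ → ℕ} (hv : d.Valid x ξ) (hξm : ∀ i < m, ξ i < m) :
    ξ (m - 1) = d.e (d.pred x (m - 1)) := by
  obtain ⟨hne, hcard⟩ := hv
  have hinj : Set.InjOn ξ (Finset.range m) := by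
    intro a ha b hb hab
    simp only [Finset.coe_range, Set.mem_Iio] at ha hb
    rcases lt_trichotomy a b with h | h | h
    · exact absurd hab (hne a b h (hx ▸ hb))
    · exact h
    · exact absurd hab.symm (hne b a h (hx ▸ ha))
  have himg : (Finset.range m).image ξ = Finset.range m := by
    apply Finset.eq_of_subset_of_card_le
    · intro v hv
      obtain ⟨a, ha, rfl⟩ := Finset.mem_image.1 hv
      exact Finset.mem_range.2 (hξm a (Finset.mem_range.1 ha))
    · rw [Finset.card_image_of_injOn hinj]
  rw [← hcard (m - 1) (by omega), Nat.sub_add_cancel hm]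
  have himg' : ((Finset.range m).filter fun j => ξ j < ξ (m - 1)).image ξ
      = Finset.range (ξ (m - 1)) := by
    ext v
    simp only [Finset.mem_image, Finset.mem_filter, Finset.mem_range]
    constructor
    · rintro ⟨a, ⟨-, h⟩, rfl⟩
      exact h
    · intro hv
      have hvm : v ∈ (Finset.range m).image ξ := by
        rw [himg]
        exact Finset.mem_range.2 (hv.trans (hξm _ (by omega)))
      obtain ⟨a, ha, rfl⟩ := Finset.mem_image.1 hvm
      exact ⟨a, ⟨Finset.mem_range.1 ha, hv⟩, rfl⟩
  rw [← Finset.card_image_of_injOn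
    (hinj.mono (Finset.coe_subset.2 (Finset.filter_subset _ _))), himg', Finset.card_range]

theorem statement_11 (d : Predendro) (hd : d.IsDendrogram)
    (x y : d.C) (m : ℕ) (hm : 0 < m) (hx : d.lh x = m) (hy : d.lh y = m)
    (ξ ζ : ℕ → ℕ) (hvx : d.Valid x ξ) (hvy : d.Valid y ζ)
    (hξm : ∀ i < m, ξ i < m) (hζm : ∀ i < m, ζ i < m)
    (hlt : d.KBlt (x, ξ) (y, ζ)) :
    (d.suc (d.pred x (m - 1)) y ∧ d.lt x y) ∨
    ∃ ξ' : ℕ → ℕ, d.Valid (d.pred x (m - 1)) ξ' ∧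
      (∀ i < m - 1, ξ' i < m ∧ ξ' i ≠ d.e (d.pred x (m - 1))) ∧
      d.KBlt (d.pred x (m - 1), ξ') (y, ζ) := by
  have hlx : d.lh (d.pred x (m - 1)) = m - 1 := d.pred_lh x (m - 1) (by omega)
  have hpp : ∀ j ≤ m - 1, d.pred (d.pred x (m - 1)) j = d.pred x j :=
    fun j hj => d.pred_pred x (m - 1) j hj (by omega)
  have hξlast := hvx.last_eq hm hx hξm
  have hζlast := hvy.last_eq hm hy hζm
  have hvx' : d.Valid (d.pred x (m - 1)) ξ := by
    refine ⟨fun i j hij hj => hvx.1 i j hij (by omega), fun i hi => ?_⟩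
    rw [hpp i (by omega)]
    exact hvx.2 i (by omega)
  have hξ' : ∀ i < m - 1, ξ i < m ∧ ξ i ≠ d.e (d.pred x (m - 1)) := by
    refine fun i hi => ⟨hξm i (by omega), ?_⟩
    rw [← hξlast]
    exact hvx.1 i (m - 1) hi (by omega)
  rcases hlt with ⟨h, -, -⟩ | ⟨i, hix, hiy, hpred, hpar, hdiff⟩
  · -- `y(m)` is not a proper initial segment of `x(m)`: the lengths agree.
    simp only at h
    omega
  simp only at hix hiy hpred hpar hdiff
  rcases Nat.lt_or_ge (m - 1) i with him | him
  · -- The sequences differ only in their last points.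
    obtain rfl : i = m := by omega
    left
    rcases hdiff with ⟨-, hxy⟩ | ⟨-, h, -⟩
    · refine ⟨(d.suc_char _ _).2 ⟨by omega, ?_⟩, ?_⟩
      · rw [hlx, hpred (i - 1) him]
      · have h1 := d.pred_self x
        have h2 := d.pred_self y
        rw [hx] at h1
        rw [hy] at h2
        rwa [h1, h2] at hxy
    · omega
  · right
    refine ⟨ξ, hvx', hξ', Or.inr ⟨i, by simp only; omega, hiy, ?_, hpar, ?_⟩⟩
    · intro j hj
      simp only
      rw [hpp j (by omega)]
      exact hpred j hj
    · simp only
      rw [hpp i him]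
      rcases hdiff with h | ⟨heq, -, h2, h3⟩
      · exact Or.inl h
      · refine Or.inr ⟨heq, ?_, h2, h3⟩
        rcases Nat.lt_or_ge i (m - 1) with h | h
        · omega
        · -- Both last parameters equal `e(x')`, so they cannot differ.
          obtain rfl : i = m - 1 := by omega
          rw [hξlast, hζlast, heq] at h3
          exact absurd h3 (lt_irrefl _)

end
end

section
/- Let κ be a measurable cardinal with a normal measure U on κ, and for n < ω let U^n denote the induced ultrafilter on the set [κ]^n of increasing n-tuples from κ (generated by the sets [Y]^n for Y ∈ U). Let c be a countable well-order and c = ⋃_{n<ω} c_n with each c_n a finite suborder of c. For each n define the ultrafilter U_{c_n} on the set κ^{c_n} of order-embeddings c_n → κ by: X ∈ U_{c_n} iff { p ∘ ε_n : p ∈ X } ∈ U^{|c_n|}, where ε_n : |c_n| → c_n is the unique order isomorphism. Then each U_{c_n} is an ω₁-complete ultrafilter, and for every family of sets X_n ∈ U_{c_n} (n < ω) there exists an order-embedding f : c → κ such that f ↾ c_n ∈ X_n for every n < ω. -/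
/-!
The combinatorial core is Rowbottom's partition theorem (`rowbottom`): every set of increasing
`n`-tuples is decided by a cube `[Y]^n` with `Y ∈ U`. It is proved by induction on `n`: for each
first entry `a` the induction hypothesis gives `Y a ∈ U` deciding the tails, and the diagonal
intersection of the sets `Y a`, cut down to the first entries with the same verdict, decides the
whole set. This makes each `U_{c_n}` an ultrafilter; properness and `ω₁`-completeness come from
the fact that members of `U` are uncountable (`not_countable_of_mem`) and from countable
completeness of `U`.

For the embedding, choose `Y n ∈ U` whose cube witnesses `X n ∈ U_{c_n}`. The intersection of all
`Y n` lies in `U`, so it is an uncountable well-order and `C` embeds into it as an initial segment.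
The restriction of this embedding to each `c_n` has its values in `Y n`, hence belongs to `X n`.
-/

noncomputable section

/-- `U` is an ultrafilter on (the powerset of) `S`. -/
def IsUltra {S : Type*} (U : Set (Set S)) : Prop :=
  (∀ A ∈ U, ∀ B : Set S, A ⊆ B → B ∈ U) ∧ (∀ A ∈ U, ∀ B ∈ U, A ∩ B ∈ U) ∧
    (∅ : Set S) ∉ U ∧ ∀ A : Set S, A ∈ U ∨ Aᶜ ∈ U

/-- `U` is closed under countable intersections (`ω₁`-complete). -/
def CtblComplete {S : Type*} (U : Set (Set S)) : Prop :=
  ∀ f : ℕ → Set S, (∀ i, f i ∈ U) → (⋂ i, f i) ∈ U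

/-- The induced measure `U^n` on the set of increasing `n`-tuples (order embeddings
`Fin n ↪o K`), generated by the cubes `[Y]^n` for `Y ∈ U`. -/
def powMem {K : Type*} [LinearOrder K] (U : Set (Set K)) (n : ℕ)
    (X : Set (Fin n ↪o K)) : Prop :=
  ∃ Y ∈ U, ∀ p : Fin n ↪o K, (∀ i, p i ∈ Y) → p ∈ X

/-- The measure `U_{c}` on the set `κ^{c}` of order embeddings of a finite suborder `c`
into `K`:  `X ∈ U_c` iff `{p ∘ ε : p ∈ X} ∈ U^{|c|}`, where `ε : Fin |c| ≃o c` is the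
unique order isomorphism. -/
def Ucn {C K : Type*} [LinearOrder C] [LinearOrder K] (U : Set (Set K)) (s : Finset C) :
    Set (Set ((↥s : Type _) ↪o K)) :=
  {X | powMem U s.card
    {q | ∃ p ∈ X, q = ((s.orderIsoOfFin rfl).toOrderEmbedding.trans p)}}

/-- Membership in `Ucn` without the transport along `Fin |s| ≃o s`. -/
theorem mem_Ucn_iff {C K : Type*} [LinearOrder C] [LinearOrder K] (U : Set (Set K))
    (s : Finset C) (X : Set ((↥s : Type _) ↪o K)) :
    X ∈ Ucn U s ↔ ∃ Y ∈ U, ∀ p : (↥s : Type _) ↪o K, (∀ i, p i ∈ Y) → p ∈ X := by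
  constructor
  · rintro ⟨Y, hY, h⟩
    refine ⟨Y, hY, fun p hp => ?_⟩
    obtain ⟨p', hp', he⟩ := h ((s.orderIsoOfFin rfl).toOrderEmbedding.trans p) (fun i => hp _)
    have : p = p' := by
      ext x
      have := DFunLike.congr_fun he ((s.orderIsoOfFin rfl).symm x)
      simpa using this
    rwa [this]
  · rintro ⟨Y, hY, h⟩
    refine ⟨Y, hY, fun q hq => ⟨(s.orderIsoOfFin rfl).symm.toOrderEmbedding.trans q,
      h _ (fun i => hq _), ?_⟩⟩
    ext i
    simp

/-- Rowbottom's theorem for two colours: a cube `[Y]^n` with `Y ∈ U` decides `X`. -/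
theorem rowbottom {K : Type*} [LinearOrder K] (U : Set (Set K)) (hU : IsUltra U)
    (hne : U.Nonempty)
    (hnormal : ∀ f : K → Set K, (∀ a, f a ∈ U) → {b : K | ∀ a < b, b ∈ f a} ∈ U) (n : ℕ) :
    ∀ X : Set (Fin n ↪o K), ∃ Y ∈ U, (∀ p : Fin n ↪o K, (∀ i, p i ∈ Y) → p ∈ X) ∨
      (∀ p : Fin n ↪o K, (∀ i, p i ∈ Y) → p ∉ X) := by
  obtain ⟨-, hinter, -, hultra⟩ := hU
  induction n with
  | zero =>
    intro X
    obtain ⟨Y, hY⟩ := hne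
    refine ⟨Y, hY, ?_⟩
    -- There is only one empty tuple.
    by_cases h : ∃ p, p ∈ X
    · obtain ⟨p, hp⟩ := h
      exact Or.inl fun q _ => by
        rwa [show q = p from RelEmbedding.ext fun i => i.elim0]
    · exact Or.inr fun q _ hq => h ⟨q, hq⟩
  | succ n ih =>
    intro X
    choose Y hY hYX using fun a : K => ih
      {q | ∃ p : Fin (n + 1) ↪o K, p ∈ X ∧ p 0 = a ∧ ∀ i, p (Fin.succ i) = q i}
    have hdiag := hnormal Y hY
    have htail : ∀ p : Fin (n + 1) ↪o K, (∀ i, p i ∈ {b : K | ∀ a < b, b ∈ Y a}) →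
        ∀ i, ((Fin.succOrderEmb n).trans p) i ∈ Y (p 0) := fun p hp i =>
      hp (Fin.succ i) (p 0) (p.lt_iff_lt.2 (Fin.succ_pos i))
    rcases hultra {a | ∀ q : Fin n ↪o K, (∀ i, q i ∈ Y a) →
      ∃ p : Fin (n + 1) ↪o K, p ∈ X ∧ p 0 = a ∧ ∀ i, p (Fin.succ i) = q i} with hA | hA
    · refine ⟨_, hinter _ hA _ hdiag, Or.inl fun p hp => ?_⟩
      obtain ⟨p', hp', h0, hs⟩ := (hp 0).1 _ (htail p fun i => (hp i).2)
      have : p = p' := by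
        ext i
        refine Fin.cases ?_ (fun i => ?_) i
        · exact h0.symm
        · exact (hs i).symm
      rwa [this]
    · refine ⟨_, hinter _ hA _ hdiag, Or.inr fun p hp hpX => ?_⟩
      rcases hYX (p 0) with h | h
      · exact (hp 0).1 h
      · exact h _ (htail p fun i => (hp i).2) ⟨p, hpX, rfl, fun i => rfl⟩

theorem not_countable_of_mem {K : Type*} (U : Set (Set K)) (hU : IsUltra U)
    (hcc : CtblComplete U) (hnp : ∀ a : K, ({a} : Set K) ∉ U) (Y : Set K) (hY : Y ∈ U) :
    ¬ Y.Countable := by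
  intro hc
  obtain ⟨-, hinter, hempty, hultra⟩ := hU
  have hYne : Y.Nonempty := Set.nonempty_iff_ne_empty.2 fun h => hempty (h ▸ hY)
  obtain ⟨g, rfl⟩ := hc.exists_eq_range hYne
  have h := hcc (fun i => {g i}ᶜ) fun i => (hultra {g i}).resolve_left (hnp _)
  refine hempty ?_
  convert hinter _ hY _ h
  ext x
  simp only [Set.mem_empty_iff_false, Set.mem_inter_iff, Set.mem_range, Set.mem_iInter,
    Set.mem_compl_iff, Set.mem_singleton_iff, false_iff, not_and, not_forall, not_not]
  rintro ⟨i, rfl⟩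
  exact ⟨i, rfl⟩

/-- Comparability of well-orders: an uncountable one is longer than any countable one. -/
theorem exists_embedding_of_not_countable {C K : Type} [LinearOrder C] [LinearOrder K]
    [Countable C] [WellFoundedLT C] [WellFoundedLT K] (Y : Set K) (hY : ¬ Y.Countable) :
    ∃ f : C ↪o K, ∀ x, f x ∈ Y := by
  rcases InitialSeg.total (α := C) (β := Y) (· < ·) (· < ·) with f | f
  · exact ⟨(OrderEmbedding.ofStrictMono f fun a b h => f.map_rel_iff.2 h).trans
      (OrderEmbedding.subtype (· ∈ Y)), fun x => (f x).2⟩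
  · exact absurd (Set.countable_coe_iff.1 (Function.Injective.countable f.injective)) hY

/-!
Statement 15: Let `κ` be a measurable cardinal (represented by a well-ordered type `K`)
with a normal measure `U`, let `C` be a countable well-order covered by finite suborders
`c_n`.  Then each `U_{c_n}` is an `ω₁`-complete ultrafilter and for all `X_n ∈ U_{c_n}`
there is an order embedding `f : C ↪o K` with `f ↾ c_n ∈ X_n` for all `n`.
-/

theorem statement_15 (K : Type) [LinearOrder K] (hwoK : WellFoundedLT K)
    (hbig : Cardinal.aleph0 < Cardinal.mk K)
    (U : Set (Set K)) (hU : IsUltra U)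
    (hcomplete : ∀ (I : Type) (f : I → Set K),
      Cardinal.mk I < Cardinal.mk K → (∀ i, f i ∈ U) → (⋂ i, f i) ∈ U)
    (hnp : ∀ a : K, ({a} : Set K) ∉ U)
    (hnormal : ∀ f : K → Set K, (∀ a, f a ∈ U) → {b : K | ∀ a < b, b ∈ f a} ∈ U)
    (C : Type) [LinearOrder C] (hctble : Countable C) (hwoC : WellFoundedLT C)
    (cn : ℕ → Finset C) (hcover : ∀ x : C, ∃ n, x ∈ cn n) :
    (∀ n, IsUltra (Ucn U (cn n)) ∧ CtblComplete (Ucn U (cn n))) ∧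
    ∀ X : ∀ n, Set ((↥(cn n) : Type _) ↪o K),
      (∀ n, X n ∈ Ucn U (cn n)) →
      ∃ f : C ↪o K, ∀ n,
        ((OrderEmbedding.subtype (· ∈ cn n)).trans f) ∈ X n := by
  have hcc : CtblComplete U := fun f hf => hcomplete ℕ f (by simpa using hbig) hf
  have hunc := not_countable_of_mem U hU hcc hnp
  have hne : U.Nonempty := (hU.2.2.2 ∅).elim (fun h => ⟨_, h⟩) fun h => ⟨_, h⟩
  refine ⟨fun n => ⟨⟨?_, ?_, ?_, ?_⟩, ?_⟩, ?_⟩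
  · intro A hA B hAB
    rw [mem_Ucn_iff] at hA ⊢
    obtain ⟨Y, hY, h⟩ := hA
    exact ⟨Y, hY, fun p hp => hAB (h p hp)⟩
  · intro A hA B hB
    rw [mem_Ucn_iff] at hA hB ⊢
    obtain ⟨Y, hY, h⟩ := hA
    obtain ⟨Z, hZ, h'⟩ := hB
    exact ⟨Y ∩ Z, hU.2.1 _ hY _ hZ, fun p hp =>
      ⟨h p fun i => (hp i).1, h' p fun i => (hp i).2⟩⟩
  · rw [mem_Ucn_iff]
    rintro ⟨Y, hY, h⟩
    obtain ⟨f, hf⟩ := exists_embedding_of_not_countable (C := C) Y (hunc Y hY)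
    exact h ((OrderEmbedding.subtype (· ∈ cn n)).trans f) fun i => hf _
  · intro A
    let e := (cn n).orderIsoOfFin rfl
    obtain ⟨Y, hY, h⟩ := rowbottom U hU hne hnormal (cn n).card
      {q | e.symm.toOrderEmbedding.trans q ∈ A}
    have hback : ∀ p : (↥(cn n) : Type _) ↪o K,
        e.symm.toOrderEmbedding.trans (e.toOrderEmbedding.trans p) = p := by
      intro p
      ext x
      simp
    rw [mem_Ucn_iff, mem_Ucn_iff]
    refine h.imp (fun h => ⟨Y, hY, fun p hp => ?_⟩) (fun h => ⟨Y, hY, fun p hp => ?_⟩)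
    · simpa [hback] using h (e.toOrderEmbedding.trans p) fun i => hp _
    · simpa [hback] using h (e.toOrderEmbedding.trans p) fun i => hp _
  · intro A hA
    simp only [mem_Ucn_iff] at hA ⊢
    choose Y hY h using hA
    exact ⟨⋂ i, Y i, hcc Y hY, fun p hp => Set.mem_iInter.2 fun i =>
      h i p fun x => Set.mem_iInter.1 (hp x) i⟩
  · intro X hX
    simp only [mem_Ucn_iff] at hX
    choose Y hY h using hX
    obtain ⟨f, hf⟩ := exists_embedding_of_not_countable (C := C) _ (hunc _ (hcc Y hY))
    exact ⟨f, fun n => h n _ fun x => Set.mem_iInter.1 (hf _) n⟩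

end
end
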